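/- arXiv:math/0509461 — 4 statements merged into one kernel-verified Lean document; each statement's English description precedes it below -/
import Mathlib

section
/- Let M be a ring and Φ : M → M a ring homomorphism, and let A₁ denote the centralizer of the range of Φ (the set of x ∈ M commuting with every element of Φ(M)). Then for all natural numbers k and all i < k: (a) for every x ∈ A₁, the element Φ^i(x) commutes with every element of the range of Φ^k; and (b) for all i < i' < k and all x, y ∈ A₁, Φ^i(x) · Φ^{i'}(y) = Φ^{i'}(y) · Φ^i(x). (In particular the subalgebras A₁, Φ(A₁), …, Φ^{k−1}(A₁) pairwise commute and are all contained in the centralizer of Φ^k(M).) -/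
/-!
Multiplicative maps carry the centralizer of `S` into the centralizer of the image of `S`. Hence
`Φ^i` sends the centralizer of `Φ(M)` into that of `Φ^i(Φ(M)) = Φ^(i+1)(M)`, which contains
`Φ^k(M)` as soon as `i < k`. Pairwise commutation is the case `k = i'`, since `Φ^i'(y) ∈ Φ^i'(M)`.
-/

open Set

theorem antitone_range_iterate {α : Type*} (f : α → α) : Antitone fun n ↦ range f^[n] :=
  antitone_nat_of_succ_le fun n ↦ by
    simpa only [Function.iterate_succ] using range_comp_subset_range f f^[n]

section MulHomClass

variable {F M N : Type*} [Mul M] [Mul N]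

theorem mapsTo_centralizer_image [FunLike F M N] [MulHomClass F M N] (f : F) (S : Set M) :
    MapsTo f (centralizer S) (centralizer (f '' S)) := by
  rintro x hx _ ⟨s, hs, rfl⟩
  rw [← map_mul, hx s hs, map_mul]

variable [FunLike F M M] [MulHomClass F M M]

theorem mapsTo_iterate_centralizer_image (f : F) (S : Set M) (n : ℕ) :
    MapsTo f^[n] (centralizer S) (centralizer (f^[n] '' S)) := by
  induction n with
  | zero => simpa only [Function.iterate_zero, image_id] using mapsTo_id _
  | succ n ih =>
    rw [Function.iterate_succ', image_comp]
    exact (mapsTo_centralizer_image f _).comp ih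

theorem statement0_general (Φ : F) {i k : ℕ} (hik : i < k) :
    MapsTo Φ^[i] (centralizer (range Φ)) (centralizer (range Φ^[k])) := by
  have range_subset : range Φ^[k] ⊆ Φ^[i] '' range Φ := by
    rw [← range_comp, ← Function.iterate_succ]
    exact antitone_range_iterate Φ hik
  exact (mapsTo_iterate_centralizer_image Φ _ i).mono_right (centralizer_subset range_subset)

end MulHomClass

/-- Lemma 1 of the paper: the relative commutant `Φ^k(M)' ∩ M` contains
pairwise commuting copies `Φ^i(A₁)` for `i = 0, …, k−1`, where
`A₁ = Φ(M)' ∩ M` is the centralizer of the range of `Φ`. -/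
theorem statement0 {M : Type*} [Ring M] (Φ : M →+* M) (A₁ : Set M)
    (hA₁ : A₁ = Set.centralizer (Set.range ⇑Φ)) :
    ∀ k : ℕ, ∀ i < k,
      (∀ x ∈ A₁, ∀ z ∈ Set.range ((⇑Φ)^[k]), (⇑Φ)^[i] x * z = z * (⇑Φ)^[i] x) ∧
      (∀ i' : ℕ, i < i' → i' < k → ∀ x ∈ A₁, ∀ y ∈ A₁,
        (⇑Φ)^[i] x * (⇑Φ)^[i'] y = (⇑Φ)^[i'] y * (⇑Φ)^[i] x) := by
  subst hA₁
  exact fun k i hik ↦ ⟨fun x hx z hz ↦ (statement0_general Φ hik hx z hz).symm,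
    fun i' hii' _ x hx y _ ↦ (statement0_general Φ hii' hx _ (mem_range_self y)).symm⟩
end

section
/- With A and r as defined in the context, the unital ℂ-subalgebra of M_n(ℂ) generated by A ∪ {r} equals the linear span of the set {x·r^m·y : 0 ≤ m ≤ j−1, x ∈ A, y ∈ A}, and this subalgebra is all of M_n(ℂ). (That is, ⟨A, r⟩ = A + A r A + A r² A + ⋯ + A r^{j−1} A ≅ M_n(ℂ).) -/
open Matrix

noncomputable section

/-- The index set `{1, …, n}` partitioned into consecutive blocks
`I_1, …, I_j` of sizes `a 0, …, a (j−1)`. -/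
abbrev BIdx (j : ℕ) (a : Fin j → ℕ) : Type := Σ i : Fin j, Fin (a i)

/-- The set of block-diagonal matrices, `A ≅ ⊕_{i=1}^j M_{a_i}(ℂ)`. -/
def blockDiagSet (j : ℕ) (a : Fin j → ℕ) : Set (Matrix (BIdx j a) (BIdx j a) ℂ) :=
  {x | ∀ t t' : BIdx j a, t.1 ≠ t'.1 → x t t' = 0}

/-- `c_i`, the last index of block `I_i`. -/
def lastIdx (j : ℕ) (a : Fin j → ℕ) (ha : ∀ i, 0 < a i) (i : Fin j) : BIdx j a :=
  ⟨i, ⟨a i - 1, Nat.sub_lt (ha i) Nat.one_pos⟩⟩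

/-- The cyclic successor on block labels. -/
def nextIdx (j : ℕ) (hj : 0 < j) (i : Fin j) : Fin j :=
  ⟨((i : ℕ) + 1) % j, Nat.mod_lt _ hj⟩

/-- The permutation `σ` with `σ(c_i) = c_{i+1}` (cyclically) and `σ(t) = t`
for all other `t`. -/
def sigmaPerm (j : ℕ) (a : Fin j → ℕ) (hj : 0 < j) (ha : ∀ i, 0 < a i)
    (t : BIdx j a) : BIdx j a :=
  if t = lastIdx j a ha t.1 then lastIdx j a ha (nextIdx j hj t.1) else t

/-- The permutation matrix `v` of `σ`: `v_{σ(t), t} = 1`. -/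
def vMat (j : ℕ) (a : Fin j → ℕ) (hj : 0 < j) (ha : ∀ i, 0 < a i) :
    Matrix (BIdx j a) (BIdx j a) ℂ :=
  Matrix.of fun t' t : BIdx j a => if t' = sigmaPerm j a hj ha t then (1 : ℂ) else 0

/-- The diagonal projection `s` onto the positions `c_1, …, c_j`. -/
def sMat (j : ℕ) (a : Fin j → ℕ) (ha : ∀ i, 0 < a i) :
    Matrix (BIdx j a) (BIdx j a) ℂ :=
  Matrix.diagonal fun t : BIdx j a => if t = lastIdx j a ha t.1 then (1 : ℂ) else 0

/-- `r = s v s`. -/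
def rMat (j : ℕ) (a : Fin j → ℕ) (hj : 0 < j) (ha : ∀ i, 0 < a i) :
    Matrix (BIdx j a) (BIdx j a) ℂ :=
  sMat j a ha * vMat j a hj ha * sMat j a ha

/-- The central unitary `w = Σ_i γ^{i−1} 1_i`. -/
def wMat (j : ℕ) (a : Fin j → ℕ) (γ : ℂ) : Matrix (BIdx j a) (BIdx j a) ℂ :=
  Matrix.diagonal fun t : BIdx j a => γ ^ (t.1 : ℕ)

/-- The diagonal projection `1_i` onto block `I_i`. -/
def oneBlock (j : ℕ) (a : Fin j → ℕ) (i : Fin j) : Matrix (BIdx j a) (BIdx j a) ℂ :=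
  Matrix.diagonal fun t : BIdx j a => if t.1 = i then (1 : ℂ) else 0

/-- `p_i`: supported on block `I_i`, there equal to
`diag(1, γ_i, …, γ_i^{a_i−1})` with `γ_i = exp(2π i / a_i)`, and `0` outside. -/
def pBlock (j : ℕ) (a : Fin j → ℕ) (i : Fin j) : Matrix (BIdx j a) (BIdx j a) ℂ :=
  Matrix.diagonal fun t : BIdx j a =>
    if t.1 = i then Complex.exp (2 * Real.pi * Complex.I / (a i : ℂ)) ^ (t.2 : ℕ) else 0

/-- `q_i`: supported on block `I_i`, there equal to the cyclic permutation
matrix (mod `a_i`), and `0` outside. -/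
def qBlock (j : ℕ) (a : Fin j → ℕ) (i : Fin j) : Matrix (BIdx j a) (BIdx j a) ℂ :=
  Matrix.of fun t' t : BIdx j a =>
    if t'.1 = i ∧ t.1 = i ∧ (t'.2 : ℕ) = ((t.2 : ℕ) + 1) % a i then (1 : ℂ) else 0

/-!
On the base points `c i` of the blocks, `r` acts as the shift `c i ↦ c (τ i)`. Since every block
can be reached from every other by at most `N` applications of `τ`, for indices `t`, `t'` in the
blocks `i`, `k` there is an `m ≤ N` with `τ^[m] k = i`, and then
`E_{t,t'} = E_{t,c i} * r ^ m * E_{c k,t'}`, where both outer factors are block diagonal.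
-/

/-- Matrices that are block diagonal for the partition of the index set into the fibres of `π`. -/
def blockDiagonalMatrices {ι n : Type*} (R : Type*) [Zero R] (π : n → ι) : Set (Matrix n n R) :=
  {x | ∀ t t', π t ≠ π t' → x t t' = 0}

/-- The matrix `∑ i, E_{c (τ i), c i}`. For injective `c` it moves the base point `c i` of the
`i`-th block to that of block `τ i` and kills every other basis vector; `r` is of this form. -/
def basePointShift {ι n : Type*} (R : Type*) [Fintype ι] [DecidableEq n] [Semiring R]
    (c : ι → n) (τ : ι → ι) : Matrix n n R :=
  ∑ i, single (c (τ i)) (c i) 1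

theorem span_mul_pow_mul_le_adjoin {K B : Type*} [CommSemiring K] [Semiring B] [Algebra K B]
    (S : Set B) (r : B) (N : ℕ) :
    Submodule.span K {z | ∃ m ≤ N, ∃ x ∈ S, ∃ y ∈ S, z = x * r ^ m * y} ≤
      Subalgebra.toSubmodule (Algebra.adjoin K (S ∪ {r})) := by
  rw [Submodule.span_le]
  rintro _ ⟨m, -, x, hx, y, hy, rfl⟩
  have mem_adjoin {b : B} (hb : b ∈ S ∪ {r}) : b ∈ Algebra.adjoin K (S ∪ {r}) :=
    Algebra.subset_adjoin hb
  exact Subalgebra.mul_mem _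
    (Subalgebra.mul_mem _ (mem_adjoin (.inl hx)) (Subalgebra.pow_mem _ (mem_adjoin (.inr rfl)) m))
    (mem_adjoin (.inl hy))

theorem single_mem_blockDiagonalMatrices {ι n R : Type*} [DecidableEq n] [Zero R] {π : n → ι}
    {t t' : n} (h : π t = π t') (b : R) : single t t' b ∈ blockDiagonalMatrices R π := by
  intro p q hpq
  refine single_apply_of_ne _ _ _ _ _ ?_
  rintro ⟨rfl, rfl⟩
  exact hpq h

section Shift

variable {ι n R : Type*} [Fintype ι] [Fintype n] [DecidableEq n] [Semiring R]
  {π : n → ι} {c : ι → n} {τ : ι → ι}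

theorem basePointShift_mul_single (hc : Function.Injective c) (i : ι) (u : n) (b : R) :
    basePointShift R c τ * single (c i) u b = single (c (τ i)) u b := by
  rw [basePointShift, Finset.sum_mul, Finset.sum_eq_single_of_mem i (Finset.mem_univ i)]
  · rw [single_mul_single_same, one_mul]
  · intro k _ hki
    exact single_mul_single_of_ne _ _ _ _ (hc.ne hki) _

theorem basePointShift_pow_mul_single (hc : Function.Injective c) (m : ℕ) (i : ι) (u : n)
    (b : R) :
    basePointShift R c τ ^ m * single (c i) u b = single (c (τ^[m] i)) u b := by
  induction m with
  | zero => simp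
  | succ m ih =>
    rw [pow_succ', Matrix.mul_assoc, ih, basePointShift_mul_single hc,
      Function.iterate_succ_apply']

theorem single_eq_mul_basePointShift_pow_mul (hc : Function.LeftInverse π c) {m : ℕ} {t t' : n}
    (hm : τ^[m] (π t') = π t) (b : R) :
    single t t' b =
      single t (c (π t)) b * basePointShift R c τ ^ m * single (c (π t')) t' 1 := by
  rw [Matrix.mul_assoc, basePointShift_pow_mul_single hc.injective, hm, single_mul_single_same,
    mul_one]

theorem span_mul_basePointShift_pow_mul_eq_top (K : Type*) [Semiring K] [Module K R]
    (hc : Function.LeftInverse π c) {N : ℕ} (hτ : ∀ i k, ∃ m ≤ N, τ^[m] i = k) :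
    Submodule.span K {z : Matrix n n R | ∃ m ≤ N, ∃ x ∈ blockDiagonalMatrices R π,
      ∃ y ∈ blockDiagonalMatrices R π, z = x * basePointShift R c τ ^ m * y} = ⊤ := by
  rw [eq_top_iff]
  intro M _
  rw [matrix_eq_sum_single M]
  refine Submodule.sum_mem _ fun t _ => Submodule.sum_mem _ fun t' _ => Submodule.subset_span ?_
  obtain ⟨m, hmN, hm⟩ := hτ (π t') (π t)
  exact ⟨m, hmN, _, single_mem_blockDiagonalMatrices (hc (π t)).symm _, _,
    single_mem_blockDiagonalMatrices (hc (π t')) _, single_eq_mul_basePointShift_pow_mul hc hm _⟩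

theorem statement6_general (K : Type*) [CommSemiring K] [Algebra K R]
    (hc : Function.LeftInverse π c) {N : ℕ} (hτ : ∀ i k, ∃ m ≤ N, τ^[m] i = k) :
    Algebra.adjoin K (blockDiagonalMatrices R π ∪ {basePointShift R c τ}) =
      (⊤ : Subalgebra K (Matrix n n R)) ∧
    Subalgebra.toSubmodule
        (Algebra.adjoin K (blockDiagonalMatrices R π ∪ {basePointShift R c τ})) =
      Submodule.span K {z : Matrix n n R | ∃ m ≤ N, ∃ x ∈ blockDiagonalMatrices R π,
        ∃ y ∈ blockDiagonalMatrices R π, z = x * basePointShift R c τ ^ m * y} := by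
  have hspan := span_mul_basePointShift_pow_mul_eq_top (R := R) K hc hτ
  have hadjoin : Subalgebra.toSubmodule
      (Algebra.adjoin K (blockDiagonalMatrices R π ∪ {basePointShift R c τ})) = ⊤ :=
    top_le_iff.mp (hspan ▸ span_mul_pow_mul_le_adjoin _ _ N)
  exact ⟨Algebra.toSubmodule_eq_top.mp hadjoin, hadjoin.trans hspan.symm⟩

end Shift

theorem val_iterate_nextIdx {j : ℕ} (hj : 0 < j) (m : ℕ) (i : Fin j) :
    ((nextIdx j hj)^[m] i : ℕ) = (i + m) % j := by
  induction m with
  | zero => simp [Nat.mod_eq_of_lt i.isLt]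
  | succ m ih => simp [Function.iterate_succ_apply', nextIdx, ih, Nat.add_assoc]

theorem exists_iterate_nextIdx_eq {j : ℕ} (hj : 0 < j) (i k : Fin j) :
    ∃ m ≤ j - 1, (nextIdx j hj)^[m] i = k := by
  refine ⟨(k + (j - i)) % j, Nat.le_sub_one_of_lt (Nat.mod_lt _ hj), Fin.ext ?_⟩
  rw [val_iterate_nextIdx, Nat.add_mod_mod, show (i : ℕ) + (k + (j - i)) = k + j by lia,
    Nat.add_mod_right, Nat.mod_eq_of_lt k.isLt]

section CornerShift

variable {j : ℕ} {a : Fin j → ℕ} (hj : 0 < j) (ha : ∀ i, 0 < a i)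

theorem leftInverse_fst_lastIdx : Function.LeftInverse Sigma.fst (lastIdx j a ha) :=
  fun _ => rfl

theorem sMat_eq_basePointShift_id : sMat j a ha = basePointShift ℂ (lastIdx j a ha) id := by
  ext p q
  simp only [sMat, basePointShift, id_eq, Matrix.sum_apply, single_apply, diagonal_apply]
  rw [Finset.sum_eq_single_of_mem p.1 (Finset.mem_univ _)]
  · grind
  · rintro i - hi
    exact if_neg fun h => hi (congrArg Sigma.fst h.1)

theorem sigmaPerm_lastIdx (i : Fin j) :
    sigmaPerm j a hj ha (lastIdx j a ha i) = lastIdx j a ha (nextIdx j hj i) :=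
  if_pos rfl

theorem vMat_mul_single (t u : BIdx j a) (b : ℂ) :
    vMat j a hj ha * single t u b = single (sigmaPerm j a hj ha t) u b := by
  ext p q
  by_cases hq : u = q
  · subst hq
    simp [vMat, single_apply, eq_comm]
  · rw [mul_single_apply_of_ne _ _ _ _ _ (Ne.symm hq), single_apply_of_col_ne _ _ hq]

theorem rMat_eq_basePointShift :
    rMat j a hj ha = basePointShift ℂ (lastIdx j a ha) (nextIdx j hj) := by
  have sMat_mul_single (i k : Fin j) :
      sMat j a ha * single (lastIdx j a ha i) (lastIdx j a ha k) 1 =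
        single (lastIdx j a ha i) (lastIdx j a ha k) 1 := by
    rw [sMat_eq_basePointShift_id,
      basePointShift_mul_single (leftInverse_fst_lastIdx ha).injective, id]
  calc rMat j a hj ha
    _ = ∑ i, sMat j a ha *
          (vMat j a hj ha * single (lastIdx j a ha i) (lastIdx j a ha i) 1) := by
        rw [rMat, Matrix.mul_assoc]
        nth_rw 2 [sMat_eq_basePointShift_id]
        simp only [basePointShift, id_eq, Finset.mul_sum]
    _ = basePointShift ℂ (lastIdx j a ha) (nextIdx j hj) := by
        simp only [vMat_mul_single, sigmaPerm_lastIdx, sMat_mul_single, basePointShift]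

end CornerShift

/-- Lemma 3 of the paper: `⟨A, r⟩ = A + A r A + ⋯ + A r^{j−1} A ≅ M_n(ℂ)`. -/
theorem statement6 (j : ℕ) (hj : 0 < j) (a : Fin j → ℕ) (ha : ∀ i, 0 < a i) :
    Algebra.adjoin ℂ (blockDiagSet j a ∪ {rMat j a hj ha}) =
      (⊤ : Subalgebra ℂ (Matrix (BIdx j a) (BIdx j a) ℂ)) ∧
    Subalgebra.toSubmodule (Algebra.adjoin ℂ (blockDiagSet j a ∪ {rMat j a hj ha})) =
      Submodule.span ℂ {z : Matrix (BIdx j a) (BIdx j a) ℂ |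
        ∃ m ≤ j - 1, ∃ x ∈ blockDiagSet j a, ∃ y ∈ blockDiagSet j a,
          z = x * rMat j a hj ha ^ m * y} := by
  rw [rMat_eq_basePointShift]
  exact statement6_general ℂ (leftInverse_fst_lastIdx ha) (exists_iterate_nextIdx_eq hj)
end
end

section
/- With the notation of the context, the unital ℂ-subalgebra of M_n(ℂ) ⊗ M_n(ℂ) generated by the set {x ⊗ 1 : x ∈ A} ∪ {r ⊗ 1} ∪ {p_{i,2} : 1 ≤ i ≤ j} ∪ {q_{i,2} : 1 ≤ i ≤ j} ∪ {w ⊗ r} is all of M_n(ℂ) ⊗ M_n(ℂ) ≅ M_{n²}(ℂ). (That is, M₂ := ⟨A₁, r₁, A₂, r₂⟩ = M_n(ℂ) ⊗ M_n(ℂ).) -/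
open Matrix

noncomputable section

open Kronecker

/-!
Let `S` be the generated algebra. Within one tensor factor, an algebra of matrices containing all
diagonal matrix units is the full matrix algebra as soon as the directed graph formed by the
supports of its elements is strongly connected. The arrows of `A` (or of the cyclic shifts `q_i`)
connect each block, and those of `r` run cyclically through the last indices of the blocks, so both
`A ∪ {r}` and `{p_i, q_i, r}` generate `M_n(ℂ)`; in the second case the diagonal matrix units are
polynomials in the `p_i`. The first fact gives `M_n(ℂ) ⊗ 1 ⊆ S`. For fixed `y`, the set
`{x | x ⊗ y ∈ S}` is then a two-sided ideal of the simple ring `M_n(ℂ)`, so a generator `x ⊗ y` with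
`x ≠ 0` may be replaced by `1 ⊗ y`, and the second fact gives `1 ⊗ M_n(ℂ) ⊆ S`.
-/

section Tensor

open TensorProduct

variable {R A B : Type*} [CommRing R] [Ring A] [Algebra R A] [IsSimpleRing A] [Ring B] [Algebra R B]
  {S : Subalgebra R (A ⊗[R] B)}

theorem one_tmul_mem_of_tmul_mem (hA : ∀ x : A, x ⊗ₜ[R] (1 : B) ∈ S) {x : A} {y : B} (hx : x ≠ 0)
    (hxy : x ⊗ₜ y ∈ S) : (1 : A) ⊗ₜ[R] y ∈ S := by
  let I : TwoSidedIdeal A := .mk' {x | x ⊗ₜ[R] y ∈ S}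
    (by simp)
    (fun h h' => by simpa only [Set.mem_ofPred_eq, add_tmul] using S.add_mem h h')
    (fun h => by simpa only [Set.mem_ofPred_eq, neg_tmul] using S.neg_mem h)
    (fun {z _} h => by simpa using S.mul_mem (hA z) h)
    (fun {_ z} h => by simpa using S.mul_mem h (hA z))
  have hI (z : A) : z ∈ I ↔ z ⊗ₜ[R] y ∈ S := by simp [I]
  exact (hI 1).mp (IsSimpleRing.one_mem_of_ne_zero_mem I hx ((hI x).mpr hxy))

theorem subalgebra_tensorProduct_eq_top_of_adjoin_eq_top {X : Set A} {Y : Set B}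
    (hX : Algebra.adjoin R X = ⊤) (hY : Algebra.adjoin R Y = ⊤) (hXS : ∀ x ∈ X, x ⊗ₜ[R] (1 : B) ∈ S)
    (hYS : ∀ y ∈ Y, ∃ x : A, x ≠ 0 ∧ x ⊗ₜ[R] y ∈ S) : S = ⊤ := by
  have left_mem (x : A) : x ⊗ₜ[R] (1 : B) ∈ S := by
    have : Algebra.adjoin R X ≤ S.comap Algebra.TensorProduct.includeLeft := Algebra.adjoin_le hXS
    exact this (hX ▸ Algebra.mem_top)
  have right_mem (y : B) : (1 : A) ⊗ₜ[R] y ∈ S := by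
    have : Algebra.adjoin R Y ≤ S.comap Algebra.TensorProduct.includeRight :=
      Algebra.adjoin_le fun y hy =>
        let ⟨_, hx, hxy⟩ := hYS y hy
        one_tmul_mem_of_tmul_mem left_mem hx hxy
    exact this (hY ▸ Algebra.mem_top)
  refine eq_top_iff.mpr fun z _ => z.induction_on S.zero_mem (fun x y => ?_) fun _ _ => S.add_mem
  simpa using S.mul_mem (left_mem x) (right_mem y)

end Tensor

section MatrixSubalgebra

open Relation TensorProduct

variable {K m n : Type*} [Field K] [Fintype m] [DecidableEq m] [Fintype n] [DecidableEq n]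

theorem subalgebra_kronecker_eq_top_of_adjoin_eq_top [Nonempty m]
    {S : Subalgebra K (Matrix (m × n) (m × n) K)}
    {X : Set (Matrix m m K)} {Y : Set (Matrix n n K)} (hX : Algebra.adjoin K X = ⊤)
    (hY : Algebra.adjoin K Y = ⊤) (hXS : ∀ x ∈ X, x ⊗ₖ (1 : Matrix n n K) ∈ S)
    (hYS : ∀ y ∈ Y, ∃ x : Matrix m m K, x ≠ 0 ∧ x ⊗ₖ y ∈ S) : S = ⊤ := by
  let e := kroneckerAlgEquiv m n K
  have tmul_mem_comap (x : Matrix m m K) (y : Matrix n n K) :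
      x ⊗ₜ[K] y ∈ S.comap e.toAlgHom ↔ x ⊗ₖ y ∈ S := by
    simp [e]
  have hS : S.comap e.toAlgHom = ⊤ := by
    refine subalgebra_tensorProduct_eq_top_of_adjoin_eq_top hX hY ?_ ?_ <;>
      simpa only [tmul_mem_comap]
  refine eq_top_iff.mpr fun M _ => ?_
  have hM : e.symm M ∈ S.comap e.toAlgHom := hS ▸ Algebra.mem_top
  simpa using hM

variable {T : Subalgebra K (Matrix n n K)}

/-- The support graph of an algebra `T` of matrices: there is an arrow `t → u` when some `M ∈ T`
sends the basis vector `e_t` to a vector with nonzero `u`-th coordinate. Mind the order of the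
indices: the entry involved is `M u t`. -/
def SupportArrow (T : Subalgebra K (Matrix n n K)) (t u : n) : Prop :=
  ∃ M ∈ T, M u t ≠ 0

theorem single_mem_of_supportArrow {t u : n} (ht : single t t (1 : K) ∈ T)
    (hu : single u u (1 : K) ∈ T) (h : SupportArrow T t u) : single u t (1 : K) ∈ T := by
  obtain ⟨M, hM, hMut⟩ := h
  have := T.smul_mem (T.mul_mem (T.mul_mem hu hM) ht) (M u t)⁻¹
  simpa [single_mul_mul_single, hMut] using this

theorem subalgebra_eq_top_of_single_mem {R : Type*} [CommSemiring R]
    {T : Subalgebra R (Matrix n n R)} (h : ∀ t u, single t u (1 : R) ∈ T) : T = ⊤ := by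
  refine eq_top_iff.mpr fun M _ => ?_
  rw [matrix_eq_sum_single M]
  refine T.sum_mem fun t _ => T.sum_mem fun u _ => ?_
  simpa using T.smul_mem (h t u) (M t u)

theorem subalgebra_eq_top_of_reflTransGen_supportArrow (hdiag : ∀ t, single t t (1 : K) ∈ T)
    (hconn : ∀ t u, ReflTransGen (SupportArrow T) t u) : T = ⊤ := by
  refine subalgebra_eq_top_of_single_mem fun u t => ?_
  induction hconn t u with
  | refl => exact hdiag t
  | tail _ harrow ih =>
    simpa using T.mul_mem (single_mem_of_supportArrow (hdiag _) (hdiag _) harrow) ih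

theorem diagonal_mem_of_diagonal_mem {d e : n → K} (hd : diagonal d ∈ T)
    (hde : ∀ u v, d u = d v → e u = e v) : diagonal e ∈ T := by
  obtain ⟨P, hP⟩ := (Polynomial.exists_eval_eq_iff d e).mpr hde
  have aeval_diagonal : Polynomial.aeval (diagonal d) P = diagonal e := by
    rw [← diagonalAlgHom_apply (R := K) d, Polynomial.aeval_algHom_apply, Polynomial.aeval_pi_apply,
      diagonalAlgHom_apply]
    simp [hP]
  rw [← aeval_diagonal]
  exact Algebra.adjoin_le (Set.singleton_subset_iff.mpr hd)
    (Polynomial.aeval_mem_adjoin_singleton K _)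

theorem single_mem_of_diagonal_mem {d : n → K} (hd : diagonal d ∈ T) {t : n}
    (ht : ∀ u, d u = d t → u = t) : single t t (1 : K) ∈ T := by
  rw [← diagonal_single]
  refine diagonal_mem_of_diagonal_mem hd fun u v huv => ?_
  have eq_iff : u = t ↔ v = t :=
    ⟨fun h => ht v (huv ▸ congrArg d h), fun h => ht u (huv ▸ congrArg d h)⟩
  simp only [Pi.single_apply, eq_iff]

end MatrixSubalgebra

section Blocks

open Relation

theorem reflTransGen_of_succ_mod {m : ℕ} {r : Fin m → Fin m → Prop}
    (h : ∀ k l : Fin m, (l : ℕ) = (k + 1) % m → r k l) (k l : Fin m) : ReflTransGen r k l := by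
  have hm : 0 < m := k.pos
  have reaches_add (d : ℕ) : ReflTransGen r k ⟨(k + d) % m, Nat.mod_lt _ hm⟩ := by
    induction d with
    | zero => simp [Nat.mod_eq_of_lt k.isLt, ReflTransGen.refl]
    | succ d ih => exact ih.tail (h _ _ (by simp [add_assoc]))
  have hl : ((k : ℕ) + (m - k + l)) % m = l := by
    rw [show (k : ℕ) + (m - k + l) = l + m by omega, Nat.add_mod_right, Nat.mod_eq_of_lt l.isLt]
  simpa only [hl] using reaches_add (m - k + l)

variable {j : ℕ} {a : Fin j → ℕ} (hj : 0 < j) (ha : ∀ i, 0 < a i)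

theorem reflTransGen_of_blocks {r : BIdx j a → BIdx j a → Prop}
    (hblock : ∀ i (k l : Fin (a i)), ReflTransGen r ⟨i, k⟩ ⟨i, l⟩)
    (hlast : ∀ i, r (lastIdx j a ha i) (lastIdx j a ha (nextIdx j hj i))) (t u : BIdx j a) :
    ReflTransGen r t u := by
  have last_reaches (i i' : Fin j) : ReflTransGen r (lastIdx j a ha i) (lastIdx j a ha i') := by
    refine (reflTransGen_of_succ_mod (fun k l hkl => ?_) i i').lift (lastIdx j a ha)
      fun _ _ => id
    rw [show l = nextIdx j hj k from Fin.ext hkl]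
    exact hlast k
  exact ((hblock t.1 t.2 _).trans (last_reaches t.1 u.1)).trans (hblock u.1 _ u.2)

theorem rMat_apply_lastIdx (i : Fin j) :
    rMat j a hj ha (lastIdx j a ha (nextIdx j hj i)) (lastIdx j a ha i) = 1 := by
  have fst_lastIdx (i : Fin j) : (lastIdx j a ha i).1 = i := rfl
  simp [rMat, sMat, vMat, sigmaPerm, mul_diagonal, diagonal_mul, fst_lastIdx]

theorem subalgebra_eq_top_of_rMat_mem {T : Subalgebra ℂ (Matrix (BIdx j a) (BIdx j a) ℂ)}
    (hdiag : ∀ t, single t t (1 : ℂ) ∈ T)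
    (hblock : ∀ i (k l : Fin (a i)), ReflTransGen (SupportArrow T) ⟨i, k⟩ ⟨i, l⟩)
    (hr : rMat j a hj ha ∈ T) : T = ⊤ :=
  subalgebra_eq_top_of_reflTransGen_supportArrow hdiag <|
    reflTransGen_of_blocks hj ha hblock fun i =>
      ⟨_, hr, (rMat_apply_lastIdx hj ha i).trans_ne one_ne_zero⟩

theorem single_mem_blockDiagSet (i : Fin j) (k l : Fin (a i)) :
    single (⟨i, k⟩ : BIdx j a) ⟨i, l⟩ (1 : ℂ) ∈ blockDiagSet j a := by
  intro t t' htt'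
  refine single_apply_of_ne _ _ _ _ _ ?_
  rintro ⟨rfl, rfl⟩
  exact htt' rfl

theorem adjoin_blockDiagSet_union_rMat :
    Algebra.adjoin ℂ (blockDiagSet j a ∪ {rMat j a hj ha}) = ⊤ := by
  have single_mem (i : Fin j) (k l : Fin (a i)) :
      single (⟨i, k⟩ : BIdx j a) ⟨i, l⟩ (1 : ℂ) ∈
        Algebra.adjoin ℂ (blockDiagSet j a ∪ {rMat j a hj ha}) :=
    Algebra.subset_adjoin (.inl (single_mem_blockDiagSet i k l))
  refine subalgebra_eq_top_of_rMat_mem hj ha (fun t => single_mem t.1 t.2 t.2) (fun i k l => ?_)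
    (Algebra.subset_adjoin (.inr rfl))
  exact .single ⟨_, single_mem i l k, by simp⟩

theorem eq_of_pBlock_apply_self_eq {i : Fin j} {k : Fin (a i)} {u : BIdx j a}
    (hu : pBlock j a i u u = pBlock j a i ⟨i, k⟩ ⟨i, k⟩) : u = ⟨i, k⟩ := by
  obtain ⟨i', k'⟩ := u
  simp only [pBlock, diagonal_apply_eq, if_true] at hu
  by_cases hi : i' = i
  · subst hi
    rw [if_pos rfl] at hu
    have hroot := Complex.isPrimitiveRoot_exp (a i') k.pos.ne'
    rw [Fin.ext (hroot.pow_inj k'.isLt k.isLt hu)]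
  · rw [if_neg hi] at hu
    exact absurd hu.symm (pow_ne_zero _ (Complex.exp_ne_zero _))

theorem qBlock_apply_succ {i : Fin j} {k l : Fin (a i)} (hkl : (l : ℕ) = (k + 1) % a i) :
    qBlock j a i ⟨i, l⟩ ⟨i, k⟩ = 1 := by
  simp [qBlock, hkl]

theorem adjoin_pBlock_union_qBlock_union_rMat :
    Algebra.adjoin ℂ (Set.range (pBlock j a) ∪ Set.range (qBlock j a) ∪ {rMat j a hj ha}) = ⊤ := by
  set T := Algebra.adjoin ℂ (Set.range (pBlock j a) ∪ Set.range (qBlock j a) ∪ {rMat j a hj ha})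
  have p_mem (i : Fin j) : pBlock j a i ∈ T := Algebra.subset_adjoin (.inl (.inl ⟨i, rfl⟩))
  have q_mem (i : Fin j) : qBlock j a i ∈ T := Algebra.subset_adjoin (.inl (.inr ⟨i, rfl⟩))
  have r_mem : rMat j a hj ha ∈ T := Algebra.subset_adjoin (.inr rfl)
  refine subalgebra_eq_top_of_rMat_mem hj ha (fun ⟨i, k⟩ => ?_) (fun i k l => ?_) r_mem
  · exact single_mem_of_diagonal_mem (p_mem i) fun u hu =>
      eq_of_pBlock_apply_self_eq (by simpa only [pBlock, diagonal_apply_eq] using hu)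
  · refine (reflTransGen_of_succ_mod (fun k l hkl => ?_) k l).lift (Sigma.mk i) fun _ _ => id
    exact ⟨_, q_mem i, (qBlock_apply_succ hkl).trans_ne one_ne_zero⟩

theorem qBlock_add_one_sub_oneBlock_ne_zero {i : Fin j} (hi : 0 < a i) :
    qBlock j a i + 1 - oneBlock j a i ≠ 0 := by
  have block_entry (k l : Fin (a i)) :
      (qBlock j a i + 1 - oneBlock j a i) ⟨i, l⟩ ⟨i, k⟩ = qBlock j a i ⟨i, l⟩ ⟨i, k⟩ := by
    simp [oneBlock, one_apply, diagonal_apply]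
  intro h
  have hentry := block_entry ⟨0, hi⟩ ⟨(0 + 1) % a i, Nat.mod_lt _ hi⟩
  rw [qBlock_apply_succ rfl, h] at hentry
  exact zero_ne_one hentry

theorem wMat_ne_zero [Nonempty (BIdx j a)] {γ : ℂ} (hγ : γ ≠ 0) : wMat j a γ ≠ 0 := by
  intro h
  obtain ⟨t⟩ := ‹Nonempty (BIdx j a)›
  exact pow_ne_zero (t.1 : ℕ) hγ (by simpa [wMat] using congrFun₂ h t t)

end Blocks

/-- The generation claim `M₂ = ⟨A₁, r₁, A₂, r₂⟩ = M_n(ℂ) ⊗ M_n(ℂ)` of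
Section 3 of the paper. -/
theorem statement12 (j : ℕ) (hj : 0 < j) (a : Fin j → ℕ) (ha : ∀ i, 0 < a i)
    (γ : ℂ) (hγ : γ = Complex.exp (2 * Real.pi * Complex.I / (j : ℂ))) :
    Algebra.adjoin ℂ
      ({y | ∃ x ∈ blockDiagSet j a, y = x ⊗ₖ (1 : Matrix (BIdx j a) (BIdx j a) ℂ)} ∪
        {rMat j a hj ha ⊗ₖ (1 : Matrix (BIdx j a) (BIdx j a) ℂ)} ∪
        {y | ∃ i : Fin j, y = (1 : Matrix (BIdx j a) (BIdx j a) ℂ) ⊗ₖ pBlock j a i} ∪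
        {y | ∃ i : Fin j, y = (qBlock j a i + 1 - oneBlock j a i) ⊗ₖ qBlock j a i} ∪
        {wMat j a γ ⊗ₖ rMat j a hj ha}) =
      (⊤ : Subalgebra ℂ (Matrix (BIdx j a × BIdx j a) (BIdx j a × BIdx j a) ℂ)) := by
  have : Nonempty (BIdx j a) := ⟨lastIdx j a ha ⟨0, hj⟩⟩
  refine subalgebra_kronecker_eq_top_of_adjoin_eq_top (adjoin_blockDiagSet_union_rMat hj ha)
    (adjoin_pBlock_union_qBlock_union_rMat hj ha) ?_ ?_
  · rintro x (hx | rfl)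
    · exact Algebra.subset_adjoin (.inl (.inl (.inl (.inl ⟨x, hx, rfl⟩))))
    · exact Algebra.subset_adjoin (.inl (.inl (.inl (.inr rfl))))
  · rintro y ((⟨i, rfl⟩ | ⟨i, rfl⟩) | rfl)
    · exact ⟨1, one_ne_zero, Algebra.subset_adjoin (.inl (.inl (.inr ⟨i, rfl⟩)))⟩
    · exact ⟨_, qBlock_add_one_sub_oneBlock_ne_zero (ha i),
        Algebra.subset_adjoin (.inl (.inr ⟨i, rfl⟩))⟩
    · exact ⟨_, wMat_ne_zero (hγ ▸ Complex.exp_ne_zero _), Algebra.subset_adjoin (.inr rfl)⟩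
end
end

section
/- With the notation of the context, the unital ℂ-subalgebra of M_n(ℂ) ⊗ M_n(ℂ) generated by {p_{i,2} : 1 ≤ i ≤ j} ∪ {q_{i,2} : 1 ≤ i ≤ j} is isomorphic as a ℂ-algebra to the direct sum ⊕_{i=1}^j M_{a_i}(ℂ) (that is, A₂ ≅ A). -/
open Matrix

noncomputable section

open Kronecker

/-! A diagonal matrix with distinct entries generates all diagonal matrices (Lagrange
interpolation), and together with a transitive permutation matrix it generates every matrix unit;
hence the `p_i` and `q_i` generate `⊕ i, M_{a_i}(ℂ)`. Write `u_i = q_i + 1 - 1_i`, so that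
`u_i ^ a_i = 1`, and let `W` be the unit acting on the first tensor factor by `u_i ^ k` when the
second one is in position `k` of block `i`. Since `q_i` moves position `k` to `k + 1` modulo `a_i`,
conjugation by `W` carries `1 ⊗ q_i` to `u_i ⊗ q_i`, while it fixes the diagonal `1 ⊗ p_i`. So
`A₂` is the image of `⊕ i, M_{a_i}(ℂ)` under the injective homomorphism `x ↦ W * (1 ⊗ x) * W⁻¹`.
-/

section Generators

theorem diagonal_mem_adjoin_diagonal {m K : Type*} [Fintype m] [DecidableEq m] [Field K]
    {d : m → K} (hd : Function.Injective d) (f : m → K) :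
    diagonal f ∈ Algebra.adjoin K {diagonal d} := by
  have aeval_interpolate : Polynomial.aeval d (Lagrange.interpolate Finset.univ d f) = f := by
    ext k
    rw [Polynomial.aeval_pi_apply₂, Polynomial.coe_aeval_eq_eval,
      Lagrange.eval_interpolate_at_node f hd.injOn (Finset.mem_univ k)]
  rw [← diagonalAlgHom_apply (R := K) f, ← aeval_interpolate, ← Polynomial.aeval_algHom_apply]
  exact Polynomial.aeval_mem_adjoin_singleton K _

theorem permMatrixHom_apply_apply {m R : Type*} [Fintype m] [DecidableEq m] [NonAssocSemiring R]
    (σ : Equiv.Perm m) (k l : m) :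
    (permMatrixHom σ : Matrix m m R) k l = if k = σ l then 1 else 0 := by
  simp [Equiv.eq_symm_apply, eq_comm]

theorem permMatrixHom_mul_single {m R : Type*} [Fintype m] [DecidableEq m] [NonAssocSemiring R]
    (σ : Equiv.Perm m) (k l : m) (c : R) :
    permMatrixHom σ * single k l c = single (σ k) l c := by
  ext s t
  simp [PEquiv.toMatrix_toPEquiv_mul, single_apply, Equiv.eq_symm_apply]

theorem adjoin_diagonal_permMatrixHom {m K : Type*} [Fintype m] [DecidableEq m] [Field K]
    {d : m → K} (hd : Function.Injective d) {σ : Equiv.Perm m} (hσ : ∀ k l, σ.SameCycle k l) :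
    Algebra.adjoin K {diagonal d, permMatrixHom σ} = ⊤ := by
  set A := Algebra.adjoin K {diagonal d, permMatrixHom σ}
  have diagonal_mem (f : m → K) : diagonal f ∈ A :=
    Algebra.adjoin_mono (by simp) (diagonal_mem_adjoin_diagonal hd f)
  have shift_mem : permMatrixHom σ ∈ A := Algebra.subset_adjoin (by simp)
  have single_mem (k l : m) (c : K) : single k l c ∈ A := by
    obtain ⟨r, rfl⟩ := (hσ l k).exists_nat_pow_eq
    rw [← permMatrixHom_mul_single, map_pow, ← diagonal_single]
    exact mul_mem (pow_mem shift_mem r) (diagonal_mem _)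
  refine eq_top_iff.2 fun x _ => ?_
  rw [matrix_eq_sum_single x]
  exact sum_mem fun k _ => sum_mem fun l _ => single_mem k l _

theorem pi_single_pow {ι : Type*} [DecidableEq ι] {A : ι → Type*} [∀ i, MonoidWithZero (A i)]
    (i : ι) (x : A i) {r : ℕ} (hr : r ≠ 0) :
    (Pi.single i x : ∀ i, A i) ^ r = Pi.single i (x ^ r) := by
  ext k
  rw [Pi.pow_apply, ← Pi.apply_single (fun _ y => y ^ r) fun _ => zero_pow hr]

theorem adjoin_iUnion_image_single {ι R : Type*} [Finite ι] [DecidableEq ι] [CommSemiring R]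
    {A : ι → Type*} [∀ i, Semiring (A i)] [∀ i, Algebra R (A i)] {s : ∀ i, Set (A i)}
    (hs : ∀ i, Algebra.adjoin R (s i) = ⊤)
    (hone : ∀ i, Pi.single i 1 ∈ Algebra.adjoin R (⋃ i, Pi.single i '' s i)) :
    Algebra.adjoin R (⋃ i, Pi.single i '' s i) = ⊤ := by
  cases nonempty_fintype ι
  set S := Algebra.adjoin R (⋃ i, Pi.single i '' s i)
  have single_mem (i : ι) (x : A i) : Pi.single i x ∈ S := by
    have hx : x ∈ Algebra.adjoin R (s i) := hs i ▸ Algebra.mem_top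
    induction hx using Algebra.adjoin_induction with
    | mem x hx => exact Algebra.subset_adjoin (Set.mem_iUnion_of_mem i (Set.mem_image_of_mem _ hx))
    | algebraMap r =>
      rw [Algebra.algebraMap_eq_smul_one, Pi.single_smul]
      exact S.smul_mem (hone i) r
    | add x y _ _ hx hy => exact Pi.single_add i x y ▸ add_mem hx hy
    | mul x y _ _ hx hy => exact Pi.single_mul i x y ▸ mul_mem hx hy
  refine eq_top_iff.2 fun x _ => ?_
  rw [← Finset.univ_sum_single x]
  exact sum_mem fun i _ => single_mem i (x i)

theorem adjoin_single_diagonal_permMatrixHom {ι K : Type*} [Finite ι] [DecidableEq ι] [Field K]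
    {m : ι → Type*} [∀ i, Fintype (m i)] [∀ i, DecidableEq (m i)]
    {d : ∀ i, m i → K} (hd : ∀ i, Function.Injective (d i))
    {σ : ∀ i, Equiv.Perm (m i)} (hσ : ∀ i k l, (σ i).SameCycle k l) :
    Algebra.adjoin K (Set.range (fun i => Pi.single i (diagonal (d i))) ∪
      Set.range fun i => (Pi.single i (permMatrixHom (σ i)) : ∀ i, Matrix (m i) (m i) K)) = ⊤ := by
  rw [← Set.iUnion_singleton_eq_range, ← Set.iUnion_singleton_eq_range, ← Set.iUnion_union_distrib]
  simp only [Set.singleton_union, ← Set.image_pair]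
  refine adjoin_iUnion_image_single (fun i => adjoin_diagonal_permMatrixHom (hd i) (hσ i))
    fun i => ?_
  rw [← permMatrixHom.map_one, ← pow_orderOf_eq_one (σ i), map_pow,
    ← pi_single_pow i _ (orderOf_pos (σ i)).ne']
  exact pow_mem (Algebra.subset_adjoin (Set.mem_iUnion_of_mem i (by simp))) _

end Generators

section Rotation

theorem val_finRotate_pow_apply {n : ℕ} (r : ℕ) (k : Fin n) :
    ((finRotate n ^ r) k : ℕ) = (k + r) % n := by
  have := k.neZero
  induction r with
  | zero => simp [Nat.mod_eq_of_lt k.2]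
  | succ r ih =>
    rw [pow_succ', Equiv.Perm.mul_apply, finRotate_apply, Fin.val_add, ih, Fin.val_one',
      ← Nat.add_mod, add_assoc]

theorem val_finRotate {n : ℕ} (k : Fin n) : (finRotate n k : ℕ) = (k + 1) % n :=
  val_finRotate_pow_apply 1 k

theorem finRotate_pow_self (n : ℕ) : finRotate n ^ n = 1 := by
  ext k
  simp [val_finRotate_pow_apply, Nat.mod_eq_of_lt k.2]

theorem sameCycle_finRotate {n : ℕ} (k l : Fin n) : (finRotate n).SameCycle k l := by
  refine ⟨((n - k + l : ℕ) : ℤ), Fin.ext ?_⟩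
  rw [zpow_natCast, val_finRotate_pow_apply, ← add_assoc, Nat.add_sub_cancel' k.2.le,
    Nat.add_mod_left, Nat.mod_eq_of_lt l.2]

end Rotation

section Twist

variable {l m R : Type*} [Fintype l] [DecidableEq l] [Fintype m] [DecidableEq m] [CommRing R]

/-- The controlled unit `Σ t, U t ⊗ₖ single t t 1`, which applies `U t` to the first tensor factor
when the second one is in position `t`; it is encoded as a block diagonal matrix. -/
def blockDiagonalUnit (U : m → (Matrix l l R)ˣ) : (Matrix (l × m) (l × m) R)ˣ :=
  Units.map (blockDiagonalRingHom l m R : _ →* _) (MulEquiv.piUnits.symm U)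

/-- The embedding `x ↦ W * (1 ⊗ₖ x) * W⁻¹` of `m × m` matrices into the Kronecker product, twisted
by the controlled unit `W` of `U`. -/
def twistedKronecker (U : m → (Matrix l l R)ˣ) :
    Matrix m m R →ₐ[R] Matrix (l × m) (l × m) R :=
  ((MulSemiringAction.toAlgEquiv R _ (ConjAct.toConjAct (blockDiagonalUnit U))).toAlgHom.comp
    (kroneckerAlgEquiv l m R).toAlgHom).comp Algebra.TensorProduct.includeRight

theorem twistedKronecker_injective [Nonempty l] (U : m → (Matrix l l R)ˣ) :
    Function.Injective (twistedKronecker U) := by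
  cases subsingleton_or_nontrivial R
  · exact Function.injective_of_subsingleton _
  · exact (((MulSemiringAction.toAlgEquiv R _ _).injective).comp
      (kroneckerAlgEquiv l m R).injective).comp
      (Algebra.TensorProduct.includeRight_injective (FaithfulSMul.algebraMap_injective R _))

theorem blockDiagonalUnit_mul_one_kronecker {U : m → (Matrix l l R)ˣ} {T : Matrix l l R}
    {x : Matrix m m R} (h : ∀ s t, x s t ≠ 0 → (U s : Matrix l l R) = T * U t) :
    (blockDiagonalUnit U : Matrix (l × m) (l × m) R) * ((1 : Matrix l l R) ⊗ₖ x) =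
      (T ⊗ₖ x) * (blockDiagonalUnit U : Matrix (l × m) (l × m) R) := by
  ext ⟨k, s⟩ ⟨k', t⟩
  have left : ((blockDiagonalUnit U : Matrix (l × m) (l × m) R) * ((1 : Matrix l l R) ⊗ₖ x))
      (k, s) (k', t) = (U s : Matrix l l R) k k' * x s t := by
    simp [blockDiagonalUnit, mul_apply, Fintype.sum_prod_type, blockDiagonal_apply, one_apply]
  have right : ((T ⊗ₖ x) * (blockDiagonalUnit U : Matrix (l × m) (l × m) R))
      (k, s) (k', t) = (T * U t) k k' * x s t := by
    simp [blockDiagonalUnit, mul_apply, Fintype.sum_prod_type, blockDiagonal_apply,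
      Finset.sum_mul, mul_right_comm]
  rw [left, right]
  by_cases hx : x s t = 0
  · rw [hx, mul_zero, mul_zero]
  · rw [h s t hx]

theorem twistedKronecker_eq_kronecker {U : m → (Matrix l l R)ˣ} {T : Matrix l l R}
    {x : Matrix m m R} (h : ∀ s t, x s t ≠ 0 → (U s : Matrix l l R) = T * U t) :
    twistedKronecker U x = T ⊗ₖ x :=
  (Units.mul_inv_eq_iff_eq_mul _).2 (blockDiagonalUnit_mul_one_kronecker h)

theorem twistedKronecker_diagonal (U : m → (Matrix l l R)ˣ) (d : m → R) :
    twistedKronecker U (diagonal d) = 1 ⊗ₖ diagonal d :=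
  twistedKronecker_eq_kronecker fun s t hst => by
    rw [one_mul, show s = t from by_contra fun h => hst (diagonal_apply_ne d h)]

end Twist

section SingleBlock

variable {ι : Type*} [DecidableEq ι] {m : ι → Type*}

/-- The block diagonal matrix whose `i`-th diagonal block is `x` and whose other entries vanish. -/
def singleBlock {R : Type*} [Zero R] (i : ι) (x : Matrix (m i) (m i) R) :
    Matrix (Σ i, m i) (Σ i, m i) R :=
  blockDiagonal' (Pi.single (M := fun i => Matrix (m i) (m i) R) i x)

theorem exists_of_singleBlock_apply_ne_zero {R : Type*} [Zero R] {i : ι}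
    {x : Matrix (m i) (m i) R} {s t : Σ i, m i} (h : singleBlock i x s t ≠ 0) :
    ∃ k l, s = ⟨i, k⟩ ∧ t = ⟨i, l⟩ ∧ x k l ≠ 0 := by
  obtain ⟨i₁, k⟩ := s
  obtain ⟨i₂, l⟩ := t
  obtain rfl : i₁ = i₂ := by_contra fun hne => h (blockDiagonal'_apply_ne _ _ _ hne)
  rw [singleBlock, blockDiagonal'_apply_eq] at h
  obtain rfl : i₁ = i := by_contra fun hne => h (by
    rw [Pi.single_eq_of_ne hne, Matrix.zero_apply])
  exact ⟨k, l, rfl, rfl, by rwa [Pi.single_eq_same] at h⟩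

theorem singleBlock_diagonal {R : Type*} [Zero R] [∀ i, DecidableEq (m i)] (i : ι)
    (d : m i → R) :
    singleBlock i (diagonal d) =
      diagonal fun t : Σ i, m i => (Pi.single i d : ∀ i, m i → R) t.1 t.2 := by
  rw [← blockDiagonal'_diagonal]
  exact congrArg _ (funext fun _ =>
    (Pi.apply_single (fun _ => diagonal) (fun _ => diagonal_zero) i d _).symm)

/-- `Matrix.blockDiagonal'` as the algebra homomorphism embedding `⊕ i, M_{m i}(R)` in the matrices
over the disjoint union of the blocks. -/
def blockDiagonal'AlgHom (R : Type*) [CommSemiring R] [Fintype ι] (m : ι → Type*)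
    [∀ i, Fintype (m i)] [∀ i, DecidableEq (m i)] :
    (∀ i, Matrix (m i) (m i) R) →ₐ[R] Matrix (Σ i, m i) (Σ i, m i) R :=
  AlgHom.ofLinearMap
    { blockDiagonal'AddMonoidHom m m R with map_smul' := blockDiagonal'_smul }
    blockDiagonal'_one blockDiagonal'_mul

end SingleBlock

section CyclicTwist

variable {ι : Type*} {n : ι → ℕ}

/-- The units `T i ^ k`, one for each position `k` of each block `i`; by `hT` they satisfy
`U ⟨i, k + 1⟩ = T i * U ⟨i, k⟩` for `k + 1` modulo `n i`. -/
def cyclicPowers {M : Type*} [Monoid M] {T : ι → M} (hT : ∀ i, T i ^ n i = 1)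
    (t : Σ i, Fin (n i)) : Mˣ :=
  Units.ofPowEqOne (T t.1) (n t.1) (hT t.1) t.2.pos.ne' ^ (t.2 : ℕ)

theorem val_cyclicPowers_finRotate {M : Type*} [Monoid M] {T : ι → M} (hT : ∀ i, T i ^ n i = 1)
    (i : ι) (k : Fin (n i)) :
    (cyclicPowers hT ⟨i, finRotate (n i) k⟩ : M) = T i * cyclicPowers hT ⟨i, k⟩ := by
  simp only [cyclicPowers, Units.val_pow_eq_pow_val, Units.val_ofPowEqOne]
  rw [val_finRotate, ← pow_eq_pow_mod _ (hT i), pow_succ']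

theorem twistedKronecker_cyclicPowers {l R : Type*} [Fintype l] [DecidableEq l] [Fintype ι]
    [DecidableEq ι] [CommRing R] {T : ι → Matrix l l R} (hT : ∀ i, T i ^ n i = 1) (i : ι) :
    twistedKronecker (cyclicPowers hT) (singleBlock i (permMatrixHom (finRotate (n i)))) =
      T i ⊗ₖ singleBlock i (permMatrixHom (finRotate (n i))) := by
  refine twistedKronecker_eq_kronecker fun s t hst => ?_
  obtain ⟨k, r, rfl, rfl, hkr⟩ := exists_of_singleBlock_apply_ne_zero hst
  obtain rfl : k = finRotate (n i) r := by_contra fun hne => hkr (by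
    rw [permMatrixHom_apply_apply, if_neg hne])
  exact val_cyclicPowers_finRotate hT i r

theorem statement13_general {l K : Type*} [Fintype l] [DecidableEq l] [Nonempty l] [Fintype ι]
    [DecidableEq ι] [Field K] {d : ∀ i, Fin (n i) → K} (hd : ∀ i, Function.Injective (d i))
    {T : ι → Matrix l l K} (hT : ∀ i, T i ^ n i = 1)
    {P Q : ι → Matrix (Σ i, Fin (n i)) (Σ i, Fin (n i)) K}
    (hP : ∀ i, P i = singleBlock i (diagonal (d i)))
    (hQ : ∀ i, Q i = singleBlock i (permMatrixHom (finRotate (n i)))) :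
    Nonempty
      (Algebra.adjoin K
        ({y | ∃ i, y = (1 : Matrix l l K) ⊗ₖ P i} ∪ {y | ∃ i, y = T i ⊗ₖ Q i})
        ≃ₐ[K] ∀ i, Matrix (Fin (n i)) (Fin (n i)) K) := by
  let φ := (twistedKronecker (cyclicPowers hT)).comp (blockDiagonal'AlgHom K fun i => Fin (n i))
  have φ_injective : Function.Injective φ :=
    (twistedKronecker_injective _).comp blockDiagonal'_injective
  have φ_diagonal (i : ι) : φ (Pi.single i (diagonal (d i))) = 1 ⊗ₖ P i := by
    rw [hP, singleBlock_diagonal, ← twistedKronecker_diagonal (cyclicPowers hT),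
      ← singleBlock_diagonal]
    rfl
  have φ_shift (i : ι) : φ (Pi.single i (permMatrixHom (finRotate (n i)))) = T i ⊗ₖ Q i :=
    hQ i ▸ twistedKronecker_cyclicPowers hT i
  have adjoin_eq_range : Algebra.adjoin K
      ({y | ∃ i, y = (1 : Matrix l l K) ⊗ₖ P i} ∪ {y | ∃ i, y = T i ⊗ₖ Q i}) = φ.range := by
    rw [← Algebra.map_top,
      ← adjoin_single_diagonal_permMatrixHom hd fun _ => sameCycle_finRotate, AlgHom.map_adjoin,
      Set.image_union, ← Set.range_comp, ← Set.range_comp]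
    simp only [← φ_diagonal, ← φ_shift, Set.range, Function.comp_apply, eq_comm]
  rw [adjoin_eq_range]
  exact ⟨(AlgEquiv.ofInjective φ φ_injective).symm⟩

end CyclicTwist

section Blocks

variable {j : ℕ} {a : Fin j → ℕ}

theorem exp_pow_injective {k : ℕ} (hk : k ≠ 0) : Function.Injective fun r : Fin k =>
    Complex.exp (2 * Real.pi * Complex.I / (k : ℂ)) ^ (r : ℕ) := fun r s h =>
  Fin.ext ((Complex.isPrimitiveRoot_exp k hk).pow_inj r.2 s.2 h)

theorem pBlock_eq_singleBlock (i : Fin j) :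
    pBlock j a i = singleBlock i (diagonal fun k : Fin (a i) =>
      Complex.exp (2 * Real.pi * Complex.I / (a i : ℂ)) ^ (k : ℕ)) := by
  rw [singleBlock_diagonal, pBlock]
  congr 1 with ⟨i', k⟩
  by_cases h : i' = i
  · subst h
    simp
  · simp [h]

theorem oneBlock_eq_singleBlock (i : Fin j) :
    oneBlock j a i = singleBlock i 1 := by
  rw [← diagonal_one, singleBlock_diagonal, oneBlock]
  congr 1 with ⟨i', k⟩
  by_cases h : i' = i
  · subst h
    simp
  · simp [h]

theorem qBlock_eq_singleBlock (i : Fin j) :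
    qBlock j a i = singleBlock i (permMatrixHom (finRotate (a i))) := by
  ext ⟨i₁, k⟩ ⟨i₂, l⟩
  by_cases h : i₁ = i ∧ i₂ = i
  · obtain ⟨rfl, rfl⟩ := h
    rw [singleBlock, blockDiagonal'_apply_eq, Pi.single_eq_same, permMatrixHom_apply_apply]
    simp only [qBlock, of_apply, true_and, Fin.ext_iff, val_finRotate]
  · have hq : qBlock j a i ⟨i₁, k⟩ ⟨i₂, l⟩ = 0 := if_neg fun hq => h ⟨hq.1, hq.2.1⟩
    rw [hq]
    by_contra hne
    obtain ⟨_, _, hs, ht, _⟩ := exists_of_singleBlock_apply_ne_zero (Ne.symm hne)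
    exact h ⟨congrArg Sigma.fst hs, congrArg Sigma.fst ht⟩

theorem qBlock_add_one_sub_oneBlock_pow (i : Fin j) :
    (qBlock j a i + 1 - oneBlock j a i) ^ a i = 1 := by
  have update_one (x : Matrix (Fin (a i)) (Fin (a i)) ℂ) :
      (Pi.single i x + 1 - Pi.single i 1 : ∀ i, Matrix (Fin (a i)) (Fin (a i)) ℂ) =
        Pi.mulSingle i x := by
    ext i' : 1
    by_cases h : i' = i
    · subst h
      simp
    · simp [h]
  rw [qBlock_eq_singleBlock, oneBlock_eq_singleBlock, singleBlock, singleBlock,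
    ← blockDiagonal'_one, ← blockDiagonal'_add, ← blockDiagonal'_sub, update_one,
    ← blockDiagonal'_pow, ← Pi.mulSingle_pow, ← map_pow, finRotate_pow_self, map_one,
    Pi.mulSingle_one]

end Blocks

/-- The claim `A₂ ≅ A = ⊕_{i=1}^j M_{a_i}(ℂ)`: the unital subalgebra of
`M_n(ℂ) ⊗ M_n(ℂ)` generated by the `p_{i,2}` and `q_{i,2}` is isomorphic as a
ℂ-algebra to `⊕_{i=1}^j M_{a_i}(ℂ)`. -/
theorem statement13 (j : ℕ) (hj : 0 < j) (a : Fin j → ℕ) (ha : ∀ i, 0 < a i) :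
    Nonempty
      ((Algebra.adjoin ℂ
        ({y | ∃ i : Fin j, y = (1 : Matrix (BIdx j a) (BIdx j a) ℂ) ⊗ₖ pBlock j a i} ∪
          {y | ∃ i : Fin j, y = (qBlock j a i + 1 - oneBlock j a i) ⊗ₖ qBlock j a i}))
        ≃ₐ[ℂ] ((i : Fin j) → Matrix (Fin (a i)) (Fin (a i)) ℂ)) := by
  have : Nonempty (BIdx j a) := ⟨⟨⟨0, hj⟩, ⟨0, ha _⟩⟩⟩
  exact statement13_general (fun i => exp_pow_injective (ha i).ne')
    qBlock_add_one_sub_oneBlock_pow pBlock_eq_singleBlock qBlock_eq_singleBlock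
end
end
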